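/- arXiv:2509.14538 — 2 statements merged into one kernel-verified Lean document; each statement's English description precedes it below -/
import Mathlib

section
/- Let n ≥ 2, λ > 0, k₁, k₂ positive integers, m_j ∈ ℕ (j = 1,…,k₁), n_j ∈ ℕ (j = 1,…,k₂), and points p₁,…,p_{k₁}, q₁,…,q_{k₂} ∈ ℤⁿ. Set g = 4π ∑_{j=1}^{k₁} m_j δ_{p_j} and h = 4π ∑_{j=1}^{k₂} n_j δ_{q_j}. Then the system Δu = λ e^v (e^u − 1) + g, Δv = λ e^u (e^v − 1) + h on ℤⁿ with u(x) → 0 and v(x) → 0 as d(x) → +∞ admits a topological solution (u*, v*) with u* ≤ 0 and v* ≤ 0 on ℤⁿ, satisfying u*, v* ∈ lᵖ(ℤⁿ) for every 1 ≤ p ≤ ∞, and which is maximal among all topological solutions: for every topological solution (u, v) of the system, u ≤ u* and v ≤ v* on ℤⁿ. -/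
/-! Put `U = -u`, `V = -v`. For `U, V ≥ 0` the system `ΔU + g = λ e^{-V}(1 - e^{-U})`,
`ΔV + h = λ e^{-U}(1 - e^{-V})` is the fixed-point equation of a monotone map, the Jacobi iteration.
The iterates of `(0, 0)` increase, stay summable, and lie below every nonnegative fixed point, hence
below `(-u, -v)` for every topological solution `(u, v)`, which is nonpositive by the maximum
principle. If they are bounded with a summable limit, the limit is the least nonnegative fixed
point.

For the bound, the sum `S` of the two components of an iterate satisfies `λ e^{-S} S ≤ ΔS + f`
with `f = g + h`, and `∑ (ΔS + f) = ∑ f`. Wherever `S` drops from a value above `1` to a value at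
most `1` between neighbours, `ΔS + f` is at least a fixed positive constant. If `S > 1` at
`x, x + e₁, …, x + N e₁`, each of the parallel rays from these points in direction `e₂`, a
direction available because the dimension is at least two, contains such a drop; so `N` is bounded.
Within boundedly many steps in direction `e₁` there is thus a point where `S ≤ 1`, and the Harnack
inequality `S_k(y) ≤ (2n + λ) S_{k+1}(z)` for neighbours `y, z` carries this bound back to `x`.
Once `S ≤ B`, summing `λ e^{-B} S ≤ ΔS + f` gives the uniform `ℓ¹` bound. -/

open Filter Real

noncomputable section

namespace CS

abbrev Lat (n : ℕ) := Fin n → ℤ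

/-- d(x) = ∑ᵢ |xᵢ|, the graph distance to the origin on ℤⁿ. -/
def latDist {n : ℕ} (x : Lat n) : ℕ := ∑ i, (x i).natAbs

/-- x ~ y iff ∑ᵢ |xᵢ − yᵢ| = 1. -/
def adjacent {n : ℕ} (x y : Lat n) : Prop := (∑ i, (x i - y i).natAbs) = 1

instance {n : ℕ} (x y : Lat n) : Decidable (adjacent x y) :=
  decidable_of_iff ((∑ i, (x i - y i).natAbs) = 1) Iff.rfl

def unitVec {n : ℕ} (i : Fin n) : Lat n := fun j => if j = i then 1 else 0

/-- The graph Laplacian Δu(x) = ∑_{y ~ x} (u(y) − u(x)) on ℤⁿ. -/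
def lapl {n : ℕ} (u : Lat n → ℝ) (x : Lat n) : ℝ :=
  ∑ i, (u (x + unitVec i) + u (x - unitVec i) - 2 * u x)

/-- The filter of neighborhoods of infinity (d(x) → +∞) on ℤⁿ. -/
def atInfty (n : ℕ) : Filter (Lat n) := Filter.comap latDist Filter.atTop

/-- The Dirac mass at p. -/
def dirac {n : ℕ} (p x : Lat n) : ℝ := if x = p then 1 else 0

/-- (u,v) is a topological solution of Δu = λ eᵛ(eᵘ−1) + g, Δv = λ eᵘ(eᵛ−1) + h
with u, v → 0 at infinity. -/
def IsTopSol {n : ℕ} (lam : ℝ) (g h u v : Lat n → ℝ) : Prop :=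
  (∀ x, lapl u x = lam * Real.exp (v x) * (Real.exp (u x) - 1) + g x) ∧
  (∀ x, lapl v x = lam * Real.exp (u x) * (Real.exp (v x) - 1) + h x) ∧
  Filter.Tendsto u (atInfty n) (nhds 0) ∧
  Filter.Tendsto v (atInfty n) (nhds 0)

/-! ### The lattice at infinity -/

lemma finite_setOf_latDist_eq {n : ℕ} (r : ℕ) : {x : Lat n | latDist x = r}.Finite := by
  refine (Set.finite_Icc (fun _ ↦ -(r : ℤ)) fun _ ↦ (r : ℤ)).subset fun x hx ↦ ?_
  have habs (i : Fin n) : |x i| ≤ r := by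
    rw [Int.abs_eq_natAbs, Nat.cast_le]
    exact (Finset.single_le_sum (f := fun i ↦ (x i).natAbs) (fun _ _ ↦ Nat.zero_le _)
      (Finset.mem_univ i)).trans_eq hx
  exact ⟨fun i ↦ (abs_le.1 (habs i)).1, fun i ↦ (abs_le.1 (habs i)).2⟩

lemma atInfty_eq_cofinite (n : ℕ) : atInfty n = cofinite := by
  rw [atInfty, ← Nat.cofinite_eq_atTop]
  exact (comap_cofinite_le _).antisymm <|
    (Tendsto.cofinite_of_finite_preimage_singleton finite_setOf_latDist_eq).le_comap

lemma exists_forall_ge_of_tendsto_atInfty {n : ℕ} {u : Lat n → ℝ} {a : ℝ}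
    (hu : Tendsto u (atInfty n) (nhds a)) {x : Lat n} (hx : a < u x) : ∃ z, ∀ y, u y ≤ u z := by
  rw [atInfty_eq_cofinite, ← cocompact_eq_cofinite] at hu
  exact continuous_of_discreteTopology.exists_forall_ge' x (hu.eventually_le_const hx)

/-! ### The Laplacian -/

/-- The sum of the values of `U` over the neighbours of `x`. -/
def nbrSum {n : ℕ} (U : Lat n → ℝ) (x : Lat n) : ℝ :=
  ∑ i, (U (x + unitVec i) + U (x - unitVec i))

section Laplacian

variable {n : ℕ} {U V : Lat n → ℝ}

lemma lapl_eq_nbrSum_sub (U : Lat n → ℝ) (x : Lat n) : lapl U x = nbrSum U x - 2 * n * U x := by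
  simp only [lapl, nbrSum, Finset.sum_sub_distrib, Finset.sum_const, Finset.card_univ,
    Fintype.card_fin, nsmul_eq_mul]
  ring

lemma lapl_add (U V : Lat n → ℝ) : lapl (U + V) = lapl U + lapl V := by
  funext x
  simp only [lapl, Pi.add_apply, ← Finset.sum_add_distrib]
  exact Finset.sum_congr rfl fun i _ ↦ by ring

lemma lapl_neg (U : Lat n → ℝ) : lapl (-U) = -lapl U := by
  funext x
  simp only [lapl, Pi.neg_apply, ← Finset.sum_neg_distrib]
  exact Finset.sum_congr rfl fun i _ ↦ by ring

@[fun_prop]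
lemma continuous_lapl : Continuous (lapl : (Lat n → ℝ) → Lat n → ℝ) := by
  unfold lapl
  fun_prop

lemma nbrSum_mono (hUV : U ≤ V) : nbrSum U ≤ nbrSum V := fun _ ↦
  Finset.sum_le_sum fun _ _ ↦ add_le_add (hUV _) (hUV _)

lemma apply_sub_unitVec_le_nbrSum (hU : 0 ≤ U) (x : Lat n) (i : Fin n) :
    U (x - unitVec i) ≤ nbrSum U x :=
  (le_add_of_nonneg_left (hU _)).trans <|
    Finset.single_le_sum (f := fun i ↦ U (x + unitVec i) + U (x - unitVec i))
      (fun _ _ ↦ add_nonneg (hU _) (hU _)) (Finset.mem_univ i)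

lemma hasSum_lapl (hU : Summable U) : HasSum (lapl U) 0 := by
  have hshift (e : Lat n ≃ Lat n) : HasSum (fun x ↦ U (e x)) (∑' x, U x) :=
    e.hasSum_iff.2 hU.hasSum
  have hterm (i : Fin n) :
      HasSum (fun x ↦ U (x + unitVec i) + U (x - unitVec i) - 2 * U x) 0 := by
    rw [show (0 : ℝ) = ∑' x, U x + ∑' x, U x - 2 * ∑' x, U x by ring]
    exact ((hshift (Equiv.addRight (unitVec i))).add (hshift (Equiv.subRight (unitVec i)))).sub
      (hU.hasSum.mul_left 2)
  rw [← Finset.sum_const_zero (s := (Finset.univ : Finset (Fin n)))]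
  exact hasSum_sum fun i _ ↦ hterm i

lemma lapl_nonpos_of_forall_le {x : Lat n} (hx : ∀ y, U y ≤ U x) : lapl U x ≤ 0 :=
  Finset.sum_nonpos fun i _ ↦ by linarith [hx (x + unitVec i), hx (x - unitVec i)]

end Laplacian

lemma nonpos_of_lapl_eq {n : ℕ} {lam : ℝ} (hlam : 0 < lam) {g u v : Lat n → ℝ} (hg : 0 ≤ g)
    (heq : ∀ x, lapl u x = lam * exp (v x) * (exp (u x) - 1) + g x)
    (hu : Tendsto u (atInfty n) (nhds 0)) : u ≤ 0 := by
  intro x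
  by_contra! hx
  obtain ⟨z, hz⟩ := exists_forall_ge_of_tendsto_atInfty hu hx
  have hexp : 0 < exp (u z) - 1 := sub_pos.2 (one_lt_exp_iff.2 (hx.trans_le (hz x)))
  have hreaction : 0 < lam * exp (v z) * (exp (u z) - 1) := by positivity
  have hgz : 0 ≤ g z := hg z
  linarith [heq z, lapl_nonpos_of_forall_le hz]

/-! ### Scalar subsolutions -/

/-- A nonnegative summable `S` with `λ e^{-S} S ≤ ΔS + f`. This is all the a priori bounds use about
the sum of the two components of the system. -/
structure IsSubsolution {n : ℕ} (lam : ℝ) (f S : Lat n → ℝ) : Prop where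
  nonneg : 0 ≤ S
  summable : Summable S
  le_lapl_add : ∀ x, lam * (exp (-S x) * S x) ≤ lapl S x + f x

namespace IsSubsolution

variable {n : ℕ} {lam : ℝ} {f S : Lat n → ℝ}

lemma lapl_add_nonneg (hlam : 0 < lam) (hS : IsSubsolution lam f S) (x : Lat n) :
    0 ≤ lapl S x + f x :=
  (mul_nonneg hlam.le (mul_nonneg (exp_pos _).le (hS.nonneg x))).trans (hS.le_lapl_add x)

lemma sum_lapl_add_le (hlam : 0 < lam) (hS : IsSubsolution lam f S) (hf : Summable f)
    (F : Finset (Lat n)) : ∑ x ∈ F, (lapl S x + f x) ≤ ∑' x, f x := by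
  have hsum : HasSum (fun x ↦ lapl S x + f x) (∑' x, f x) := by
    simpa only [zero_add] using (hasSum_lapl hS.summable).add hf.hasSum
  exact sum_le_hasSum F (fun x _ ↦ hS.lapl_add_nonneg hlam x) hsum

lemma mul_sum_le_of_le (hlam : 0 < lam) (hS : IsSubsolution lam f S) (hf : Summable f) {B : ℝ}
    (hB : ∀ x, S x ≤ B) (F : Finset (Lat n)) :
    lam * exp (-B) * ∑ x ∈ F, S x ≤ ∑' x, f x := by
  rw [Finset.mul_sum]
  refine (Finset.sum_le_sum fun x _ ↦ ?_).trans (hS.sum_lapl_add_le hlam hf F)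
  have hx := hS.nonneg x
  calc lam * exp (-B) * S x = lam * (exp (-B) * S x) := mul_assoc ..
    _ ≤ lam * (exp (-S x) * S x) := by gcongr; exact hB x
    _ ≤ lapl S x + f x := hS.le_lapl_add x

/-- Either `S x` is small and `ΔS x ≥ S (x - eᵢ) - 2n S x` is large, or `S x` is not small and
`λ e^{-S x} S x` is large; the constant is the balance of the two. -/
lemma le_mul_lapl_add_of_drop (hlam : 0 < lam) (hS : IsSubsolution lam f S) (hf : 0 ≤ f)
    {x : Lat n} {i : Fin n} (hx : S x ≤ 1) (hxi : 1 < S (x - unitVec i)) :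
    lam * exp (-1) ≤ (lam * exp (-1) + 2 * n) * (lapl S x + f x) := by
  have hfx : 0 ≤ f x := hf x
  have hdrop : 1 - 2 * n * S x ≤ lapl S x + f x := by
    linarith [lapl_eq_nbrSum_sub S x, apply_sub_unitVec_le_nbrSum hS.nonneg x i]
  have hreaction : lam * exp (-1) * S x ≤ lapl S x + f x := by
    have hx0 := hS.nonneg x
    calc lam * exp (-1) * S x = lam * (exp (-1) * S x) := mul_assoc ..
      _ ≤ lam * (exp (-S x) * S x) := by gcongr
      _ ≤ lapl S x + f x := hS.le_lapl_add x
  calc lam * exp (-1) = lam * exp (-1) * (1 - 2 * n * S x) + 2 * n * (lam * exp (-1) * S x) := by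
        ring
    _ ≤ lam * exp (-1) * (lapl S x + f x) + 2 * n * (lapl S x + f x) := by gcongr
    _ = (lam * exp (-1) + 2 * n) * (lapl S x + f x) := by ring

lemma exists_drop (hS : IsSubsolution lam f S) {x : Lat n} (hx : 1 < S x) (i : Fin n) :
    ∃ t : ℕ, S (x + (t + 1) • unitVec i) ≤ 1 ∧ 1 < S (x + (t + 1) • unitVec i - unitVec i) := by
  have hinj : Function.Injective fun t : ℕ ↦ x + t • unitVec i := fun s t hst ↦ by
    simpa [unitVec] using congrFun hst i
  have hsmall : ∃ t : ℕ, S (x + t • unitVec i) ≤ 1 :=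
    ((hS.summable.comp_injective hinj).tendsto_atTop_zero.eventually_le_const zero_lt_one).exists
  obtain ⟨t, ht, ht_succ⟩ := Nat.exists_not_and_succ_of_not_zero_of_exists
    (p := fun t ↦ S (x + t • unitVec i) ≤ 1) (by simpa using hx) hsmall
  refine ⟨t, ht_succ, ?_⟩
  rw [succ_nsmul, ← add_assoc, add_sub_cancel_right]
  exact not_le.1 ht

lemma exists_le_one (hlam : 0 < lam) (hS : IsSubsolution lam f S) (hf : 0 ≤ f) (sf : Summable f)
    {i₁ i₂ : Fin n} (hi : i₁ ≠ i₂) {N : ℕ}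
    (hN : (lam * exp (-1) + 2 * n) * ∑' x, f x < (N + 1) * (lam * exp (-1))) (x : Lat n) :
    ∃ j ≤ N, S (x + j • unitVec i₁) ≤ 1 := by
  by_contra! hlarge
  have hdrop (j : Fin (N + 1)) := hS.exists_drop (hlarge j (Nat.le_of_lt_succ j.2)) i₂
  choose t ht_le ht_gt using hdrop
  set y : Fin (N + 1) → Lat n := fun j ↦ x + (j : ℕ) • unitVec i₁ + (t j + 1) • unitVec i₂ with hy
  have hinj : Function.Injective y := fun j k hjk ↦ by
    simpa [hy, unitVec, hi, Fin.val_inj] using congrFun hjk i₁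
  refine hN.not_ge ?_
  calc (N + 1) * (lam * exp (-1)) = ∑ _j : Fin (N + 1), lam * exp (-1) := by simp
    _ ≤ ∑ j, (lam * exp (-1) + 2 * n) * (lapl S (y j) + f (y j)) :=
      Finset.sum_le_sum fun j _ ↦ hS.le_mul_lapl_add_of_drop hlam hf (ht_le j) (ht_gt j)
    _ = (lam * exp (-1) + 2 * n) * ∑ z ∈ Finset.univ.map ⟨y, hinj⟩, (lapl S z + f z) := by
      rw [Finset.sum_map, Finset.mul_sum]; rfl
    _ ≤ (lam * exp (-1) + 2 * n) * ∑' x, f x := by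
      gcongr
      exact hS.sum_lapl_add_le hlam sf _

end IsSubsolution

/-! ### The nonlinearity -/

/-- The nonlinearity `e^{-b}(1 - e^{-a})` of the system in the unknowns `a = -u`, `b = -v`. -/
def reaction (a b : ℝ) : ℝ := exp (-b) * (1 - exp (-a))

lemma mul_sub_one_eq_neg_reaction (a b : ℝ) : exp b * (exp a - 1) = -reaction (-a) (-b) := by
  simp only [reaction, neg_neg]
  ring

lemma exp_neg_add_mul_le_reaction (a b : ℝ) : exp (-(a + b)) * a ≤ reaction a b := by
  calc exp (-(a + b)) * a ≤ exp (-(a + b)) * (exp a - 1) := by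
        gcongr
        linarith [add_one_le_exp a]
    _ = reaction a b := by
        rw [reaction, mul_sub, mul_sub, ← exp_add, ← exp_add]
        ring_nf

lemma reaction_nonneg {a : ℝ} (ha : 0 ≤ a) (b : ℝ) : 0 ≤ reaction a b :=
  mul_nonneg (exp_pos _).le (sub_nonneg.2 (exp_le_one_iff.2 (neg_nonpos.2 ha)))

lemma sub_reaction_le_sub_reaction {a b a' b' : ℝ} (ha : 0 ≤ a) (hb : 0 ≤ b) (haa' : a ≤ a')
    (hbb' : b ≤ b') : a - reaction a b ≤ a' - reaction a' b' := by
  have hanti : reaction a' b' ≤ reaction a' b :=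
    mul_le_mul_of_nonneg_right (exp_le_exp.2 (neg_le_neg hbb'))
      (sub_nonneg.2 (exp_le_one_iff.2 (neg_nonpos.2 (ha.trans haa'))))
  have hlip : reaction a' b - reaction a b ≤ a' - a := by
    have hsub : 0 ≤ a' - a := sub_nonneg.2 haa'
    calc reaction a' b - reaction a b = exp (-b + -a) * (1 - exp (-(a' - a))) := by
          rw [reaction, reaction, mul_sub, mul_sub, mul_sub, ← exp_add, ← exp_add, ← exp_add]
          ring_nf
      _ ≤ exp (-b + -a) * (a' - a) :=
          mul_le_mul_of_nonneg_left (by linarith [add_one_le_exp (-(a' - a))]) (exp_pos _).le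
      _ ≤ a' - a := mul_le_of_le_one_left hsub (exp_le_one_iff.2 (by linarith))
  linarith

lemma reaction_le_self {a b : ℝ} (ha : 0 ≤ a) (hb : 0 ≤ b) : reaction a b ≤ a := by
  simpa [reaction] using sub_reaction_le_sub_reaction le_rfl hb ha le_rfl

/-! ### The Jacobi iteration -/

section MonotoneOnIterate

variable {α : Type*} [Preorder α] {f : α → α} {a : α}

lemma le_iterate_of_monotoneOn_Ici (hf : MonotoneOn f (Set.Ici a)) (ha : a ≤ f a) (k : ℕ) :
    a ≤ f^[k] a := by
  have hmaps : Set.MapsTo f (Set.Ici a) (Set.Ici a) := fun _ hb ↦ ha.trans (hf le_rfl hb hb)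
  exact hmaps.iterate k le_rfl

lemma monotone_iterate_of_monotoneOn_Ici (hf : MonotoneOn f (Set.Ici a)) (ha : a ≤ f a) :
    Monotone fun k ↦ f^[k] a := by
  refine monotone_nat_of_le_succ fun k ↦ ?_
  induction k with
  | zero => exact ha
  | succ k ih =>
    rw [Function.iterate_succ_apply', Function.iterate_succ_apply' f (k + 1)]
    exact hf (le_iterate_of_monotoneOn_Ici hf ha k) (le_iterate_of_monotoneOn_Ici hf ha _) ih

lemma iterate_le_of_monotoneOn_Ici (hf : MonotoneOn f (Set.Ici a)) (ha : a ≤ f a) {b : α}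
    (hab : a ≤ b) (hb : f b ≤ b) (k : ℕ) : f^[k] a ≤ b := by
  induction k with
  | zero => exact hab
  | succ k ih =>
    rw [Function.iterate_succ_apply']
    exact (hf (le_iterate_of_monotoneOn_Ici hf ha k) hab ih).trans hb

end MonotoneOnIterate

/-- One Jacobi step for `ΔU + g = λ e^{-V}(1 - e^{-U})` with `V` given; the relaxation constant
`2n + λ` is chosen to make it monotone in `U` and `V`. -/
def relax {n : ℕ} (lam : ℝ) (g U V : Lat n → ℝ) (x : Lat n) : ℝ :=
  U x + (lapl U x + g x - lam * reaction (U x) (V x)) / (2 * n + lam)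

/-- The simultaneous Jacobi step for the two equations of the system, acting on `(U, V)`. -/
def jacobi {n : ℕ} (lam : ℝ) (g h : Lat n → ℝ) (W : (Lat n → ℝ) × (Lat n → ℝ)) :
    (Lat n → ℝ) × (Lat n → ℝ) :=
  (relax lam g W.1 W.2, relax lam h W.2 W.1)

section Relax

variable {n : ℕ} {lam : ℝ} {g U V U' V' : Lat n → ℝ}

lemma relax_eq_div (hlam : 0 < lam) (g U V : Lat n → ℝ) (x : Lat n) :
    relax lam g U V x =
      (nbrSum U x + lam * (U x - reaction (U x) (V x)) + g x) / (2 * n + lam) := by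
  have hconst : 2 * n + lam ≠ 0 := by positivity
  rw [relax, lapl_eq_nbrSum_sub]
  field_simp
  ring

lemma le_relax_iff (hlam : 0 < lam) (x : Lat n) :
    U x ≤ relax lam g U V x ↔ lam * reaction (U x) (V x) ≤ lapl U x + g x := by
  have hconst : 0 < 2 * n + lam := by positivity
  rw [relax, le_add_iff_nonneg_right, le_div_iff₀ hconst, zero_mul, sub_nonneg]

lemma relax_eq_self_iff (hlam : 0 < lam) :
    relax lam g U V = U ↔ ∀ x, lapl U x + g x = lam * reaction (U x) (V x) := by
  have hconst : 2 * n + lam ≠ 0 := by positivity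
  simp only [funext_iff, relax, add_eq_left, div_eq_zero_iff, hconst, or_false, sub_eq_zero]

lemma relax_neg_eq_neg_iff (hlam : 0 < lam) {u v : Lat n → ℝ} :
    relax lam g (-u) (-v) = -u ↔
      ∀ x, lapl u x = lam * exp (v x) * (exp (u x) - 1) + g x := by
  simp only [relax_eq_self_iff hlam, lapl_neg, Pi.neg_apply, mul_assoc,
    mul_sub_one_eq_neg_reaction]
  exact forall_congr' fun x ↦ ⟨fun hx ↦ by linarith, fun hx ↦ by linarith⟩

lemma relax_le_relax (hlam : 0 < lam) (hU : 0 ≤ U) (hV : 0 ≤ V) (hUU' : U ≤ U') (hVV' : V ≤ V') :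
    relax lam g U V ≤ relax lam g U' V' := by
  intro x
  have hreaction := sub_reaction_le_sub_reaction (hU x) (hV x) (hUU' x) (hVV' x)
  have hnbr := nbrSum_mono hUU' x
  rw [relax_eq_div hlam, relax_eq_div hlam]
  gcongr

lemma apply_sub_unitVec_le_relax (hlam : 0 < lam) (hg : 0 ≤ g) (hU : 0 ≤ U) (hV : 0 ≤ V)
    (x : Lat n) (i : Fin n) :
    U (x - unitVec i) ≤ (2 * n + lam) * relax lam g U V x := by
  have hreaction : 0 ≤ lam * (U x - reaction (U x) (V x)) :=
    mul_nonneg hlam.le (sub_nonneg.2 (reaction_le_self (hU x) (hV x)))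
  have hgx : 0 ≤ g x := hg x
  rw [relax_eq_div hlam, mul_div_cancel₀ _ (by positivity)]
  linarith [apply_sub_unitVec_le_nbrSum hU x i]

lemma summable_relax (hU : 0 ≤ U) (hV : 0 ≤ V) (sg : Summable g) (sU : Summable U) :
    Summable (relax lam g U V) := by
  have hreaction : Summable fun x ↦ reaction (U x) (V x) :=
    sU.of_nonneg_of_le (fun x ↦ reaction_nonneg (hU x) (V x))
      (fun x ↦ reaction_le_self (hU x) (hV x))
  exact sU.add ((((hasSum_lapl sU).summable.add sg).sub (hreaction.mul_left lam)).div_const _)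

end Relax

section Jacobi

variable {n : ℕ} {lam : ℝ} {g h : Lat n → ℝ}

lemma isFixedPt_jacobi_neg_iff (hlam : 0 < lam) {u v : Lat n → ℝ} :
    Function.IsFixedPt (jacobi lam g h) (-u, -v) ↔
      (∀ x, lapl u x = lam * exp (v x) * (exp (u x) - 1) + g x) ∧
      (∀ x, lapl v x = lam * exp (u x) * (exp (v x) - 1) + h x) := by
  rw [Function.IsFixedPt, jacobi, Prod.mk.injEq, relax_neg_eq_neg_iff hlam,
    relax_neg_eq_neg_iff hlam]

lemma continuous_jacobi (lam : ℝ) (g h : Lat n → ℝ) : Continuous (jacobi lam g h) := by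
  unfold jacobi relax reaction
  fun_prop

lemma monotoneOn_jacobi (hlam : 0 < lam) (g h : Lat n → ℝ) :
    MonotoneOn (jacobi lam g h) (Set.Ici 0) := fun _ hW _ _ hWW' ↦
  ⟨relax_le_relax hlam hW.1 hW.2 hWW'.1 hWW'.2, relax_le_relax hlam hW.2 hW.1 hWW'.2 hWW'.1⟩

lemma jacobi_zero_nonneg (hlam : 0 < lam) (hg : 0 ≤ g) (hh : 0 ≤ h) : 0 ≤ jacobi lam g h 0 := by
  have hrelax {f : Lat n → ℝ} (hf : 0 ≤ f) : 0 ≤ relax lam f 0 0 := fun x ↦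
    (le_relax_iff hlam x).2 (by simpa [reaction, lapl] using hf x)
  exact ⟨hrelax hg, hrelax hh⟩

end Jacobi

section Iterates

variable {n : ℕ} {lam : ℝ} {g h : Lat n → ℝ}

lemma jacobi_iterate_nonneg (hlam : 0 < lam) (hg : 0 ≤ g) (hh : 0 ≤ h) (k : ℕ) :
    0 ≤ (jacobi lam g h)^[k] 0 :=
  le_iterate_of_monotoneOn_Ici (monotoneOn_jacobi hlam g h) (jacobi_zero_nonneg hlam hg hh) k

lemma monotone_jacobi_iterate (hlam : 0 < lam) (hg : 0 ≤ g) (hh : 0 ≤ h) :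
    Monotone fun k ↦ (jacobi lam g h)^[k] 0 :=
  monotone_iterate_of_monotoneOn_Ici (monotoneOn_jacobi hlam g h) (jacobi_zero_nonneg hlam hg hh)

lemma summable_jacobi_iterate (hlam : 0 < lam) (hg : 0 ≤ g) (hh : 0 ≤ h) (sg : Summable g)
    (sh : Summable h) (k : ℕ) :
    Summable ((jacobi lam g h)^[k] 0).1 ∧ Summable ((jacobi lam g h)^[k] 0).2 := by
  induction k with
  | zero => exact ⟨summable_zero, summable_zero⟩
  | succ k ih =>
    have hk := jacobi_iterate_nonneg hlam hg hh k
    rw [Function.iterate_succ_apply']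
    exact ⟨summable_relax hk.1 hk.2 sg ih.1, summable_relax hk.2 hk.1 sh ih.2⟩

/-- The sum of the two components of the `k`-th Jacobi iterate of `(0, 0)`. -/
def iterateSum (lam : ℝ) (g h : Lat n → ℝ) (k : ℕ) : Lat n → ℝ :=
  ((jacobi lam g h)^[k] 0).1 + ((jacobi lam g h)^[k] 0).2

lemma monotone_iterateSum (hlam : 0 < lam) (hg : 0 ≤ g) (hh : 0 ≤ h) :
    Monotone (iterateSum lam g h) := fun _ _ hkl ↦
  add_le_add (monotone_jacobi_iterate hlam hg hh hkl).1 (monotone_jacobi_iterate hlam hg hh hkl).2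

lemma isSubsolution_iterateSum (hlam : 0 < lam) (hg : 0 ≤ g) (hh : 0 ≤ h) (sg : Summable g)
    (sh : Summable h) (k : ℕ) : IsSubsolution lam (g + h) (iterateSum lam g h k) := by
  have hk := jacobi_iterate_nonneg hlam hg hh k
  have sk := summable_jacobi_iterate hlam hg hh sg sh k
  refine ⟨add_nonneg hk.1 hk.2, sk.1.add sk.2, fun x ↦ ?_⟩
  have hsucc := monotone_jacobi_iterate hlam hg hh k.le_succ
  simp only [Function.iterate_succ_apply'] at hsucc
  rw [iterateSum]
  set U := ((jacobi lam g h)^[k] 0).1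
  set V := ((jacobi lam g h)^[k] 0).2
  calc lam * (exp (-(U x + V x)) * (U x + V x))
      = lam * (exp (-(U x + V x)) * U x) + lam * (exp (-(V x + U x)) * V x) := by
        rw [add_comm (V x)]; ring
    _ ≤ lam * reaction (U x) (V x) + lam * reaction (V x) (U x) := by
        gcongr <;> exact exp_neg_add_mul_le_reaction _ _
    _ ≤ (lapl U x + g x) + (lapl V x + h x) :=
        add_le_add ((le_relax_iff hlam x).1 (hsucc.1 x)) ((le_relax_iff hlam x).1 (hsucc.2 x))
    _ = lapl (U + V) x + (g + h) x := by
        simp only [lapl_add, Pi.add_apply]; ring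

lemma iterateSum_le_mul_succ (hlam : 0 < lam) (hg : 0 ≤ g) (hh : 0 ≤ h) (k : ℕ) (x : Lat n)
    (i : Fin n) :
    iterateSum lam g h k x ≤ (2 * n + lam) * iterateSum lam g h (k + 1) (x + unitVec i) := by
  have hk := jacobi_iterate_nonneg hlam hg hh k
  have hU := apply_sub_unitVec_le_relax hlam hg hk.1 hk.2 (x + unitVec i) i
  have hV := apply_sub_unitVec_le_relax hlam hh hk.2 hk.1 (x + unitVec i) i
  rw [add_sub_cancel_right] at hU hV
  simp only [iterateSum, Function.iterate_succ_apply', Pi.add_apply, mul_add]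
  exact add_le_add hU hV

lemma iterateSum_le_pow_mul (hlam : 0 < lam) (hg : 0 ≤ g) (hh : 0 ≤ h) (k : ℕ) (x : Lat n)
    (i : Fin n) (j : ℕ) :
    iterateSum lam g h k x ≤
      (2 * n + lam) ^ j * iterateSum lam g h (k + j) (x + j • unitVec i) := by
  induction j with
  | zero => simp
  | succ j ih =>
    have hstep := iterateSum_le_mul_succ hlam hg hh (k + j) (x + j • unitVec i) i
    calc iterateSum lam g h k x
        ≤ (2 * n + lam) ^ j * iterateSum lam g h (k + j) (x + j • unitVec i) := ih
      _ ≤ (2 * n + lam) ^ j *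
          ((2 * n + lam) * iterateSum lam g h (k + j + 1) (x + j • unitVec i + unitVec i)) := by
        gcongr
      _ = (2 * n + lam) ^ (j + 1) *
          iterateSum lam g h (k + (j + 1)) (x + (j + 1) • unitVec i) := by
        rw [pow_succ, mul_assoc, succ_nsmul, add_assoc x, add_assoc k]

lemma exists_iterateSum_le (hn : 2 ≤ n) (hlam : 0 < lam) (hg : 0 ≤ g) (hh : 0 ≤ h)
    (sg : Summable g) (sh : Summable h) : ∃ B, ∀ k x, iterateSum lam g h k x ≤ B := by
  let i₁ : Fin n := ⟨0, by lia⟩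
  let i₂ : Fin n := ⟨1, by lia⟩
  have hi : i₁ ≠ i₂ := by simp [i₁, i₂]
  have hconst : 1 ≤ 2 * (n : ℝ) + lam := by
    have : (2 : ℝ) ≤ n := mod_cast hn
    linarith
  have hlam' : 0 < lam * exp (-1) := by positivity
  obtain ⟨N, hN⟩ := exists_nat_gt
    (((lam * exp (-1) + 2 * n) * ∑' x, (g + h) x) / (lam * exp (-1)))
  have hN' : (lam * exp (-1) + 2 * n) * ∑' x, (g + h) x < (N + 1) * (lam * exp (-1)) := by
    rw [div_lt_iff₀ hlam'] at hN
    linarith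
  refine ⟨(2 * n + lam) ^ N, fun k x ↦ ?_⟩
  obtain ⟨j, hjN, hj⟩ := (isSubsolution_iterateSum hlam hg hh sg sh (k + N)).exists_le_one hlam
    (add_nonneg hg hh) (sg.add sh) hi hN' x
  calc iterateSum lam g h k x
      ≤ (2 * n + lam) ^ j * iterateSum lam g h (k + j) (x + j • unitVec i₁) :=
        iterateSum_le_pow_mul hlam hg hh k x i₁ j
    _ ≤ (2 * n + lam) ^ j * 1 := by
        gcongr
        exact (monotone_iterateSum hlam hg hh (by gcongr) _).trans hj
    _ ≤ (2 * n + lam) ^ N := by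
        rw [mul_one]
        gcongr

lemma exists_tendsto_jacobi_iterate (hlam : 0 < lam) (hg : 0 ≤ g) (hh : 0 ≤ h) {B : ℝ}
    (hB : ∀ k x, iterateSum lam g h k x ≤ B) :
    ∃ W, Tendsto (fun k ↦ (jacobi lam g h)^[k] 0) atTop (nhds W) := by
  have hnonneg := jacobi_iterate_nonneg hlam hg hh
  have hmono := monotone_jacobi_iterate hlam hg hh
  have hbdd₁ : BddAbove (Set.range fun k ↦ ((jacobi lam g h)^[k] 0).1) :=
    ⟨fun _ ↦ B, Set.forall_mem_range.2 fun k x ↦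
      (le_add_of_nonneg_right ((hnonneg k).2 x)).trans (hB k x)⟩
  have hbdd₂ : BddAbove (Set.range fun k ↦ ((jacobi lam g h)^[k] 0).2) :=
    ⟨fun _ ↦ B, Set.forall_mem_range.2 fun k x ↦
      (le_add_of_nonneg_left ((hnonneg k).1 x)).trans (hB k x)⟩
  exact ⟨_, (tendsto_atTop_ciSup (monotone_fst.comp hmono) hbdd₁).prodMk_nhds
    (tendsto_atTop_ciSup (monotone_snd.comp hmono) hbdd₂)⟩

lemma exists_isLeast_isFixedPt_jacobi (hn : 2 ≤ n) (hlam : 0 < lam) (hg : 0 ≤ g) (hh : 0 ≤ h)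
    (sg : Summable g) (sh : Summable h) :
    ∃ W, Summable W.1 ∧ Summable W.2 ∧
      IsLeast {W | 0 ≤ W ∧ Function.IsFixedPt (jacobi lam g h) W} W := by
  obtain ⟨B, hB⟩ := exists_iterateSum_le hn hlam hg hh sg sh
  obtain ⟨W, hW⟩ := exists_tendsto_jacobi_iterate hlam hg hh hB
  have hW_nonneg : 0 ≤ W := ge_of_tendsto' hW (jacobi_iterate_nonneg hlam hg hh)
  have hsum (x : Lat n) : Tendsto (iterateSum lam g h · x) atTop (nhds ((W.1 + W.2) x)) :=
    (hW.fst_nhds.add hW.snd_nhds).apply_nhds x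
  have hsummable : Summable (W.1 + W.2) :=
    summable_of_sum_le (add_nonneg hW_nonneg.1 hW_nonneg.2) fun F ↦
      le_of_tendsto' (tendsto_finsetSum F fun x _ ↦ hsum x) fun k ↦
        (le_div_iff₀' (by positivity)).2 <|
          (isSubsolution_iterateSum hlam hg hh sg sh k).mul_sum_le_of_le hlam (sg.add sh) (hB k) F
  refine ⟨W, ?_, ?_, ⟨hW_nonneg, ?_⟩, ?_⟩
  · exact hsummable.of_nonneg_of_le hW_nonneg.1 fun x ↦ le_add_of_nonneg_right (hW_nonneg.2 x)
  · exact hsummable.of_nonneg_of_le hW_nonneg.2 fun x ↦ le_add_of_nonneg_left (hW_nonneg.1 x)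
  · exact isFixedPt_of_tendsto_iterate hW (continuous_jacobi lam g h).continuousAt
  · rintro W' ⟨hW'_nonneg, hW'⟩
    exact le_of_tendsto' hW <| iterate_le_of_monotoneOn_Ici (monotoneOn_jacobi hlam g h)
      (jacobi_zero_nonneg hlam hg hh) hW'_nonneg hW'.le

end Iterates

/-! ### Maximal topological solutions -/

lemma memℓp_neg_of_summable {ι : Type*} {U : ι → ℝ} (hU : Summable U) {p : ENNReal} (hp : 1 ≤ p) :
    Memℓp (-U) p :=
  ((memℓp_gen (by simpa using hU.abs)).of_exponent_ge hp).neg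

lemma tendsto_neg_atInfty_of_summable {n : ℕ} {U : Lat n → ℝ} (hU : Summable U) :
    Tendsto (-U) (atInfty n) (nhds 0) := by
  rw [atInfty_eq_cofinite, ← neg_zero]
  exact hU.tendsto_cofinite_zero.neg

section Source

variable {n k : ℕ}

lemma dirac_nonneg (p x : Lat n) : 0 ≤ dirac p x := by
  unfold dirac
  positivity

lemma summable_dirac (p : Lat n) : Summable (dirac p) :=
  summable_of_ne_finset_zero (s := {p}) fun _ hx ↦ if_neg (Finset.notMem_singleton.1 hx)

lemma source_nonneg (m : Fin k → ℕ) (p : Fin k → Lat n) :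
    0 ≤ fun x ↦ 4 * Real.pi * ∑ j, (m j : ℝ) * dirac (p j) x := fun x ↦
  mul_nonneg (by positivity) <|
    Finset.sum_nonneg fun j _ ↦ mul_nonneg (Nat.cast_nonneg _) (dirac_nonneg (p j) x)

lemma summable_source (m : Fin k → ℕ) (p : Fin k → Lat n) :
    Summable fun x ↦ 4 * Real.pi * ∑ j, (m j : ℝ) * dirac (p j) x :=
  (summable_sum fun j _ ↦ (summable_dirac (p j)).mul_left _).mul_left _

end Source

theorem existence_maximal_topological_solution_general
    {n : ℕ} (hn : 2 ≤ n) (lam : ℝ) (hlam : 0 < lam) (g h : Lat n → ℝ)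
    (hg : 0 ≤ g) (hh : 0 ≤ h) (sg : Summable g) (sh : Summable h) :
    ∃ ustar vstar : Lat n → ℝ,
      IsTopSol lam g h ustar vstar ∧
      (∀ x, ustar x ≤ 0) ∧ (∀ x, vstar x ≤ 0) ∧
      (∀ pp : ENNReal, 1 ≤ pp → Memℓp ustar pp ∧ Memℓp vstar pp) ∧
      (∀ u v : Lat n → ℝ, IsTopSol lam g h u v →
        (∀ x, u x ≤ ustar x) ∧ (∀ x, v x ≤ vstar x)) := by
  obtain ⟨⟨U, V⟩, sU, sV, ⟨⟨hU, hV⟩, hfix⟩, hleast⟩ :=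
    exists_isLeast_isFixedPt_jacobi hn hlam hg hh sg sh
  rw [← neg_neg U, ← neg_neg V, isFixedPt_jacobi_neg_iff hlam] at hfix
  refine ⟨-U, -V, ⟨hfix.1, hfix.2, tendsto_neg_atInfty_of_summable sU,
    tendsto_neg_atInfty_of_summable sV⟩, neg_nonpos.2 hU, neg_nonpos.2 hV,
    fun p hp ↦ ⟨memℓp_neg_of_summable sU hp, memℓp_neg_of_summable sV hp⟩, ?_⟩
  rintro u v ⟨hu_eq, hv_eq, hu, hv⟩
  have hu_nonpos : u ≤ 0 := nonpos_of_lapl_eq hlam hg hu_eq hu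
  have hv_nonpos : v ≤ 0 := nonpos_of_lapl_eq hlam hh hv_eq hv
  have hle : (U, V) ≤ (-u, -v) := hleast ⟨⟨neg_nonneg.2 hu_nonpos, neg_nonneg.2 hv_nonpos⟩,
    (isFixedPt_jacobi_neg_iff hlam).2 ⟨hu_eq, hv_eq⟩⟩
  exact ⟨le_neg_of_le_neg hle.1, le_neg_of_le_neg hle.2⟩

/-- existence of a maximal topological solution (u*, v*), with
u* ≤ 0, v* ≤ 0, belonging to lᵖ(ℤⁿ) for all 1 ≤ p ≤ ∞. -/
theorem existence_maximal_topological_solution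
    {n : ℕ} (hn : 2 ≤ n) (lam : ℝ) (hlam : 0 < lam)
    {k₁ k₂ : ℕ} (hk₁ : 0 < k₁) (hk₂ : 0 < k₂)
    (m : Fin k₁ → ℕ) (nn : Fin k₂ → ℕ)
    (p : Fin k₁ → Lat n) (q : Fin k₂ → Lat n)
    (g h : Lat n → ℝ)
    (hg : g = fun x => 4 * Real.pi * ∑ j, (m j : ℝ) * dirac (p j) x)
    (hh : h = fun x => 4 * Real.pi * ∑ j, (nn j : ℝ) * dirac (q j) x) :
    ∃ ustar vstar : Lat n → ℝ,
      IsTopSol lam g h ustar vstar ∧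
      (∀ x, ustar x ≤ 0) ∧ (∀ x, vstar x ≤ 0) ∧
      (∀ pp : ENNReal, 1 ≤ pp → Memℓp ustar pp ∧ Memℓp vstar pp) ∧
      (∀ u v : Lat n → ℝ, IsTopSol lam g h u v →
        (∀ x, u x ≤ ustar x) ∧ (∀ x, v x ≤ vstar x)) := by
  subst hg hh
  exact existence_maximal_topological_solution_general hn lam hlam _ _ (source_nonneg m p)
    (source_nonneg nn q) (summable_source m p) (summable_source nn q)

end CS
end
end

section
/- There exists a constant C_n > 0 depending only on the dimension n such that for every finite subset Ω ⊂ ℤⁿ, |δΩ| ≥ C_n |Ω|^{(n−1)/n}, where |K| denotes the cardinality of K. -/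
/-!
Every axis-parallel line through a point of a finite set `Ω` has to leave `Ω`, so it meets `δΩ`.
Hence all line sums of the indicator of `δΩ` through a point of `Ω` are at least `1`, and the
discrete Gagliardo–Nirenberg inequality (the grid-lines lemma for counting measures) gives
`|Ω| ^ (n - 1) ≤ |δΩ| ^ n`, that is, the isoperimetric inequality with constant `1`.
-/

open Filter Real

noncomputable section

namespace CS

/-- The boundary δΩ = {y ∉ Ω : ∃ x ∈ Ω, x ~ y}. -/
def bdry {n : ℕ} (Ω : Set (Lat n)) : Set (Lat n) := {y | y ∉ Ω ∧ ∃ x ∈ Ω, adjacent x y}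

section GridLines

open MeasureTheory Function

lemma tsum_indicator_one {β : Type*} (s : Set β) :
    ∑' x, s.indicator 1 x = (s.encard : ENNReal) := by
  rw [← tsum_subtype]
  exact ENNReal.tsum_set_one s

variable {ι : Type*} [Fintype ι] {α : ι → Type*}

lemma pi_count [∀ i, Countable (α i)] [∀ i, MeasurableSpace (α i)]
    [∀ i, MeasurableSingletonClass (α i)] :
    Measure.pi (fun i => (Measure.count : Measure (α i))) = Measure.count :=
  Measure.ext_of_singleton fun x => by
    simp only [Measure.pi_singleton, Measure.count_singleton, Finset.prod_const_one]

variable [DecidableEq ι]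

lemma tsum_prod_tsum_rpow_le [∀ i, Countable (α i)] {p : ℝ}
    (hp : (Fintype.card ι : ℝ).HolderConjugate p) (f : (∀ i, α i) → ENNReal) :
    ∑' x, ∏ i, (∑' t, f (update x i t)) ^ (1 / (Fintype.card ι - 1 : ℝ)) ≤ (∑' x, f x) ^ p := by
  let (i : ι) : MeasurableSpace (α i) := ⊤
  have (i : ι) : MeasurableSingletonClass (α i) := ⟨fun _ => trivial⟩
  simpa only [pi_count, lintegral_count] using
    lintegral_prod_lintegral_pow_le (fun i => (Measure.count : Measure (α i))) hp
      (measurable_of_countable f)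

lemma indicator_le_prod_tsum_rpow {A B : Set (∀ i, α i)}
    (hAB : ∀ x ∈ A, ∀ i, ∃ t, update x i t ∈ B) {r : ℝ} (hr : 0 ≤ r) (x : ∀ i, α i) :
    A.indicator 1 x ≤
      ∏ i, (∑' t, B.indicator (1 : (∀ i, α i) → ENNReal) (update x i t)) ^ r := by
  refine Set.indicator_apply_le' (fun hx => Finset.one_le_prod' fun i _ => ?_) fun _ => zero_le
  obtain ⟨t, ht⟩ := hAB x hx i
  calc (1 : ENNReal) = (B.indicator 1 (update x i t)) ^ r := by
        rw [Set.indicator_of_mem ht, Pi.one_apply, ENNReal.one_rpow]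
    _ ≤ (∑' t, B.indicator 1 (update x i t)) ^ r := by
        gcongr
        exact ENNReal.le_tsum t

lemma encard_pow_le_encard_pow_of_lines_meet [∀ i, Countable (α i)] [Nontrivial ι]
    {A B : Set (∀ i, α i)} (hAB : ∀ x ∈ A, ∀ i, ∃ t, update x i t ∈ B) :
    A.encard ^ (Fintype.card ι - 1) ≤ B.encard ^ Fintype.card ι := by
  have card_gt_one : (1 : ℝ) < Fintype.card ι := mod_cast Fintype.one_lt_card (α := ι)
  have exponent_nonneg : (0 : ℝ) ≤ 1 / (Fintype.card ι - 1) :=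
    one_div_nonneg.2 (sub_pos.2 card_gt_one).le
  have encard_le : (A.encard : ENNReal) ≤
      (B.encard : ENNReal) ^ (Fintype.card ι / (Fintype.card ι - 1) : ℝ) := by
    rw [← tsum_indicator_one, ← tsum_indicator_one]
    exact (ENNReal.tsum_le_tsum (indicator_le_prod_tsum_rpow hAB exponent_nonneg)).trans
      (tsum_prod_tsum_rpow_le (.conjExponent card_gt_one) _)
  rw [← ENat.toENNReal_le, ENat.toENNReal_pow, ENat.toENNReal_pow]
  calc (A.encard : ENNReal) ^ (Fintype.card ι - 1)
      ≤ ((B.encard : ENNReal) ^ (Fintype.card ι / (Fintype.card ι - 1) : ℝ)) ^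
          (Fintype.card ι - 1) := by gcongr
    _ = (B.encard : ENNReal) ^ Fintype.card ι := by
        rw [← ENNReal.rpow_mul_natCast, Nat.cast_pred Fintype.card_pos,
          div_mul_cancel₀ _ (sub_pos.2 card_gt_one).ne', ENNReal.rpow_natCast]

end GridLines

section Boundary

open Function

variable {n : ℕ} {Ω : Set (Lat n)}

lemma adjacent.mem_Icc {x y : Lat n} (h : adjacent x y) : y ∈ Set.Icc (x - 1) (x + 1) := by
  have natAbs_sub_le (i : Fin n) : (x i - y i).natAbs ≤ 1 :=
    (Finset.single_le_sum_of_canonicallyOrdered (f := fun i => (x i - y i).natAbs)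
      (Finset.mem_univ i)).trans_eq h
  constructor <;> intro i <;> have := natAbs_sub_le i <;>
    simp only [Pi.sub_apply, Pi.add_apply, Pi.one_apply] <;> omega

lemma bdry_finite (hΩ : Ω.Finite) : (bdry Ω).Finite := by
  refine (hΩ.biUnion fun x _ => Set.finite_Icc (x - 1) (x + 1)).subset ?_
  rintro y ⟨-, x, hx, hxy⟩
  exact Set.mem_biUnion hx hxy.mem_Icc

lemma adjacent_update_update_iff (x : Lat n) (i : Fin n) (s t : ℤ) :
    adjacent (update x i s) (update x i t) ↔ (s - t).natAbs = 1 := by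
  rw [adjacent, Fintype.sum_eq_single i fun j hj => by simp [update_of_ne hj], update_self,
    update_self]

lemma exists_update_mem_bdry (hΩ : Ω.Finite) {x : Lat n} (hx : x ∈ Ω) (i : Fin n) :
    ∃ t : ℤ, update x i t ∈ bdry Ω := by
  have line_finite : {t : ℤ | update x i t ∈ Ω}.Finite :=
    hΩ.preimage (update_injective x i).injOn
  obtain ⟨t, ht⟩ := line_finite.exists_maximal ⟨x i, by simpa using hx⟩
  exact ⟨t + 1, ht.not_prop_of_gt (lt_add_one t), update x i t, ht.prop,
    (adjacent_update_update_iff x i t (t + 1)).2 (by simp)⟩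

lemma ncard_pow_le_ncard_bdry_pow (hn : 2 ≤ n) (hΩ : Ω.Finite) :
    Ω.ncard ^ (n - 1) ≤ (bdry Ω).ncard ^ n := by
  have : Nontrivial (Fin n) := Fin.nontrivial_iff_two_le.2 hn
  have h := encard_pow_le_encard_pow_of_lines_meet fun _ hx => exists_update_mem_bdry hΩ hx
  rw [Fintype.card_fin, ← hΩ.cast_ncard_eq, ← (bdry_finite hΩ).cast_ncard_eq] at h
  exact_mod_cast h

end Boundary

/-- isoperimetric inequality on ℤⁿ: there is a constant Cₙ > 0
depending only on n with |δΩ| ≥ Cₙ |Ω|^{(n−1)/n} for every finite Ω ⊂ ℤⁿ. -/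
theorem isoperimetric_inequality
    {n : ℕ} (hn : 2 ≤ n) :
    ∃ C : ℝ, 0 < C ∧ ∀ Ω : Set (Lat n), Ω.Finite →
      C * (Ω.ncard : ℝ) ^ (((n : ℝ) - 1) / (n : ℝ)) ≤ ((bdry Ω).ncard : ℝ) := by
  refine ⟨1, one_pos, fun Ω hΩ => ?_⟩
  have pow_le : (Ω.ncard : ℝ) ^ (n - 1) ≤ ((bdry Ω).ncard : ℝ) ^ n :=
    mod_cast ncard_pow_le_ncard_bdry_pow hn hΩ
  calc 1 * (Ω.ncard : ℝ) ^ (((n : ℝ) - 1) / (n : ℝ))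
      = ((Ω.ncard : ℝ) ^ (n - 1)) ^ (n⁻¹ : ℝ) := by
        rw [one_mul, ← Real.rpow_natCast_mul (Nat.cast_nonneg _), Nat.cast_pred (by omega),
          div_eq_mul_inv]
    _ ≤ (((bdry Ω).ncard : ℝ) ^ n) ^ (n⁻¹ : ℝ) := by gcongr
    _ = (bdry Ω).ncard := Real.pow_rpow_inv_natCast (Nat.cast_nonneg _) (by omega)

end CS
end
end
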